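/- arXiv:1904.03088 — 2 statements merged into one kernel-verified Lean document; each statement's English description precedes it below -/
import Mathlib

section
/- Let Ω ⊆ ℝ^d be open and let f ∈ L¹_loc(Ω, ℝ) satisfy ∫_Ω f Δφ = 0 for every φ ∈ C_c^∞(Ω, ℝ). Let r > 0 and let ρ_r ∈ C_c^∞(ℝ^d, ℝ) be a radial mollifier with supp ρ_r ⊆ B(0,r), ρ_r ≥ 0 and ∫ ρ_r = 1. Then (ρ_r ∗ f)(ξ) = f(ξ) for almost every ξ ∈ Ω_r := {ξ ∈ Ω : dist(ξ, ∂Ω) > r}. -/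
open MeasureTheory

/-- The `i`-th standard basis vector of `ℝ^d`. -/
noncomputable def stdBasis {d : ℕ} (i : Fin d) : EuclideanSpace ℝ (Fin d) :=
  EuclideanSpace.single i (1 : ℝ)

/-- The Laplacian `Δu(x) = Σᵢ DᵢDᵢ u (x)` of a function `u : ℝ^d → ℝ`. -/
noncomputable def lap {d : ℕ} (u : EuclideanSpace ℝ (Fin d) → ℝ)
    (x : EuclideanSpace ℝ (Fin d)) : ℝ :=
  ∑ i : Fin d, fderiv ℝ (fun y => fderiv ℝ u y (stdBasis i)) x (stdBasis i)

open Set Filter Topology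

/-- A radial antiderivative: `P` of class `C¹` with `∇P(y) = -ρ(y) y`, vanishing outside the ball. -/
lemma exists_radial_potential {d : ℕ} [NeZero d] (r : ℝ) (hr : 0 < r)
    (ρ : EuclideanSpace ℝ (Fin d) → ℝ) (hρc : Continuous ρ)
    (hρ_supp : Function.support ρ ⊆ Metric.ball 0 r)
    (hρ_radial : ∀ x y : EuclideanSpace ℝ (Fin d), ‖x‖ = ‖y‖ → ρ x = ρ y) :
    ∃ P : EuclideanSpace ℝ (Fin d) → ℝ,
      (∀ y, HasFDerivAt P (-(ρ y) • innerSL ℝ y) y) ∧ (∀ y, r ≤ ‖y‖ → P y = 0) := by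
  set e : EuclideanSpace ℝ (Fin d) := stdBasis 0 with he
  have hen : ‖e‖ = 1 := by simp [he, stdBasis]
  set h : ℝ → ℝ := fun v => ρ (Real.sqrt v • e) with hh
  have hc : Continuous h := by
    rw [hh]; fun_prop
  have hhy : ∀ y : EuclideanSpace ℝ (Fin d), h (‖y‖ ^ 2) = ρ y := by
    intro y
    apply hρ_radial
    rw [norm_smul, hen, Real.sqrt_sq (norm_nonneg _)]
    simp
  refine ⟨fun y => -(1/2) * ∫ v in (r^2)..(‖y‖^2), h v, ?_, ?_⟩
  · intro y
    have h1 : HasDerivAt (fun s => ∫ v in (r^2)..s, h v) (h (‖y‖^2)) (‖y‖^2) :=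
      intervalIntegral.integral_hasDerivAt_right (hc.intervalIntegrable _ _)
        (hc.stronglyMeasurableAtFilter _ _) hc.continuousAt
    have h2 : HasFDerivAt (fun y : EuclideanSpace ℝ (Fin d) => ‖y‖^2) (2 • innerSL ℝ y) y :=
      (hasStrictFDerivAt_norm_sq y).hasFDerivAt
    have h3 := (h1.comp_hasFDerivAt y h2).const_mul (-(1/2) : ℝ)
    refine h3.congr_fderiv ?_
    ext z
    simp [hhy]
    ring
  · intro y hy
    have : ∫ v in (r^2)..(‖y‖^2), h v = ∫ v in (r^2)..(‖y‖^2), (0:ℝ) := by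
      apply intervalIntegral.integral_congr
      intro v hv
      rw [uIcc_of_le (by gcongr)] at hv
      by_contra hne
      have := hρ_supp (show √v • e ∈ Function.support ρ from hne)
      rw [mem_ball_zero_iff, norm_smul, hen, mul_one, Real.norm_of_nonneg (Real.sqrt_nonneg _)] at this
      have h4 := Real.le_sqrt_of_sq_le hv.1
      linarith
    simp [this]

lemma hasDerivAt_radial_mean {d : ℕ} (r : ℝ)
    (ρ : EuclideanSpace ℝ (Fin d) → ℝ) (hρc : Continuous ρ) (hcs : HasCompactSupport ρ)
    (hρ_supp : Function.support ρ ⊆ Metric.ball 0 r)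
    (u : EuclideanSpace ℝ (Fin d) → ℝ) (hu : ContDiff ℝ 2 u) (t : ℝ) :
    HasDerivAt (fun t : ℝ => ∫ y, ρ y * u (t • y)) (∫ y, ρ y * fderiv ℝ u (t • y) y) t := by
  have hu1 : Continuous (fderiv ℝ u) := hu.continuous_fderiv (by norm_num)
  have huc : Continuous u := hu.continuous
  have hg : Continuous (fun p : ℝ × EuclideanSpace ℝ (Fin d) => ρ p.2 * fderiv ℝ u (p.1 • p.2) p.2) := by
    fun_prop
  obtain ⟨C, hC⟩ := ((isCompact_Icc (a := t - 1) (b := t + 1)).prod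
    (isCompact_closedBall (0 : EuclideanSpace ℝ (Fin d)) r)).exists_bound_of_continuousOn hg.continuousOn
  refine (hasDerivAt_integral_of_dominated_loc_of_deriv_le (s := Icc (t-1) (t+1))
    (bound := (Metric.closedBall (0 : EuclideanSpace ℝ (Fin d)) r).indicator (fun _ => C))
    (F := fun t y => ρ y * u (t • y)) (F' := fun t y => ρ y * fderiv ℝ u (t • y) y)
    (Icc_mem_nhds (by linarith) (by linarith)) ?_ ?_ ?_ ?_ ?_ ?_).2
  · refine Eventually.of_forall fun s => Continuous.aestronglyMeasurable (by fun_prop)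
  · exact Continuous.integrable_of_hasCompactSupport (by fun_prop) hcs.mul_right
  · exact Continuous.aestronglyMeasurable (by fun_prop)
  · refine Eventually.of_forall fun y s hs => ?_
    by_cases hy : y ∈ Metric.closedBall (0 : EuclideanSpace ℝ (Fin d)) r
    · rw [indicator_of_mem hy]
      exact hC (s, y) ⟨hs, hy⟩
    · rw [indicator_of_notMem hy]
      have : ρ y = 0 := by
        by_contra hne
        exact hy (Metric.ball_subset_closedBall (hρ_supp hne))
      simp [this]
  · exact (integrable_indicator_iff measurableSet_closedBall).2
      (integrableOn_const (measure_closedBall_lt_top.ne))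
  · refine Eventually.of_forall fun y s _ => ?_
    have h1 : HasDerivAt (fun s : ℝ => s • y) y s := by
      simpa using (hasDerivAt_id s).smul_const y
    have h2 : HasFDerivAt u (fderiv ℝ u (s • y)) (s • y) :=
      ((hu.differentiable (by norm_num)) _).hasFDerivAt
    exact (h2.comp_hasDerivAt s h1).const_mul (ρ y)

lemma radial_mean_deriv_zero {d : ℕ} [NeZero d] (r : ℝ) (hr : 0 < r)
    (ρ : EuclideanSpace ℝ (Fin d) → ℝ) (hρc : Continuous ρ) (hcs : HasCompactSupport ρ)
    (hρ_supp : Function.support ρ ⊆ Metric.ball 0 r)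
    (hρ_radial : ∀ x y : EuclideanSpace ℝ (Fin d), ‖x‖ = ‖y‖ → ρ x = ρ y)
    (u : EuclideanSpace ℝ (Fin d) → ℝ) (hu : ContDiff ℝ 2 u)
    (hlap : ∀ y ∈ Metric.ball 0 r, lap u y = 0) (t : ℝ) (ht : t ∈ Icc (0:ℝ) 1) :
    ∫ y, ρ y * fderiv ℝ u (t • y) y = 0 := by
  obtain ⟨P, hP, hP0⟩ := exists_radial_potential r hr ρ hρc hρ_supp hρ_radial
  have hPd : Differentiable ℝ P := fun y => (hP y).differentiableAt
  have hPc : Continuous P := hPd.continuous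
  have hPs : HasCompactSupport P := by
    refine HasCompactSupport.intro (isCompact_closedBall (0 : EuclideanSpace ℝ (Fin d)) r) ?_
    intro y hy
    apply hP0
    simp at hy
    exact hy.le
  have hPf : ∀ y i, fderiv ℝ P y (stdBasis i) = - (ρ y * y i) := by
    intro y i
    rw [(hP y).fderiv]
    simp [stdBasis, EuclideanSpace.inner_single_right]
  have hD : ∀ i, ContDiff ℝ 1 (fun y => fderiv ℝ u y (stdBasis i)) := by
    intro i
    exact (hu.fderiv_right (m := 1) (by norm_num)).clm_apply contDiff_const
  have hv : ∀ i, ContDiff ℝ 1 (fun y => fderiv ℝ u (t • y) (stdBasis i)) := by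
    intro i
    exact (hD i).comp (contDiff_const_smul t)
  have hvf : ∀ i y, fderiv ℝ (fun y => fderiv ℝ u (t • y) (stdBasis i)) y (stdBasis i)
      = t * fderiv ℝ (fun y => fderiv ℝ u y (stdBasis i)) (t • y) (stdBasis i) := by
    intro i y
    have h2 : HasFDerivAt (fun y => fderiv ℝ u y (stdBasis i)) _ (t • y) :=
      (((hD i).differentiable (by norm_num)) (t • y)).hasFDerivAt
    have h1 : HasFDerivAt (fun y : EuclideanSpace ℝ (Fin d) => t • y) (t • ContinuousLinearMap.id ℝ _) y :=
      (hasFDerivAt_id y).const_smul t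
    have := (h2.comp y h1).fderiv
    simp only [Function.comp_def] at this
    rw [this]
    simp
  have hvc : ∀ i, Continuous (fun y => fderiv ℝ (fun y => fderiv ℝ u (t • y) (stdBasis i)) y (stdBasis i)) :=
    fun i => ((hv i).continuous_fderiv (by norm_num)).clm_apply continuous_const
  have hparts : ∀ i, ∫ y, P y * fderiv ℝ (fun y => fderiv ℝ u (t • y) (stdBasis i)) y (stdBasis i)
      = ∫ y, ρ y * y i * fderiv ℝ u (t • y) (stdBasis i) := by
    intro i
    have hvi := (hv i).continuous
    rw [integral_mul_fderiv_eq_neg_fderiv_mul_of_integrable]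
    · simp_rw [hPf]
      rw [← integral_neg]
      congr 1; ext y; ring
    · simp_rw [hPf]
      refine Continuous.integrable_of_hasCompactSupport (by fun_prop) ?_
      exact (hcs.mul_right.neg).mul_right
    · exact Continuous.integrable_of_hasCompactSupport (hPc.mul (hvc i)) hPs.mul_right
    · exact Continuous.integrable_of_hasCompactSupport (hPc.mul hvi) hPs.mul_right
    · exact fun x _ => hPd x
    · exact fun x _ => (hv i).differentiable (by norm_num) x
  have hdec : ∀ y, ρ y * fderiv ℝ u (t • y) y
      = ∑ i, ρ y * y i * fderiv ℝ u (t • y) (stdBasis i) := by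
    intro y
    have : y = ∑ i, y i • (stdBasis i : EuclideanSpace ℝ (Fin d)) := by
      ext j
      simp [stdBasis, Pi.single_apply]
    conv_lhs => rw [show fderiv ℝ u (t • y) y = fderiv ℝ u (t • y) (∑ i, y i • (stdBasis i : EuclideanSpace ℝ (Fin d))) by rw [← this]]
    rw [map_sum, Finset.mul_sum]
    refine Finset.sum_congr rfl fun i _ => ?_
    rw [map_smul, smul_eq_mul]; ring
  simp_rw [hdec]
  rw [integral_finsetSum]
  · simp_rw [← hparts]
    rw [← integral_finsetSum]
    · rw [← integral_zero (EuclideanSpace ℝ (Fin d)) ℝ (μ := volume)]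
      congr 1; ext y
      simp_rw [hvf]
      rw [← Finset.mul_sum, ← Finset.mul_sum]
      by_cases hy : r ≤ ‖y‖
      · rw [hP0 y hy, zero_mul]
      · push Not at hy
        have : lap u (t • y) = 0 := by
          apply hlap
          rw [mem_ball_zero_iff, norm_smul, Real.norm_of_nonneg ht.1]
          nlinarith [ht.2, norm_nonneg y]
        unfold lap at this
        rw [this]; simp
    · intro i _
      exact Continuous.integrable_of_hasCompactSupport (hPc.mul (hvc i)) hPs.mul_right
  · intro i _
    have hvi := (hv i).continuous
    refine Continuous.integrable_of_hasCompactSupport (by fun_prop) ?_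
    exact hcs.mul_right.mul_right

/-- Mean value property, tested against a radial weight. -/
lemma radial_mean_value {d : ℕ} (r : ℝ) (hr : 0 < r)
    (ρ : EuclideanSpace ℝ (Fin d) → ℝ) (hρc : Continuous ρ) (hcs : HasCompactSupport ρ)
    (hρ_supp : Function.support ρ ⊆ Metric.ball 0 r)
    (hρ_radial : ∀ x y : EuclideanSpace ℝ (Fin d), ‖x‖ = ‖y‖ → ρ x = ρ y)
    (hρ_int : ∫ x, ρ x = 1)
    (u : EuclideanSpace ℝ (Fin d) → ℝ) (hu : ContDiff ℝ 2 u)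
    (hlap : ∀ y ∈ Metric.ball 0 r, lap u y = 0) :
    ∫ y, ρ y * u y = u 0 := by
  rcases Nat.eq_zero_or_pos d with rfl | hd
  · have : ∀ y, u y = u 0 := fun y => by rw [Subsingleton.elim y 0]
    simp_rw [this]
    rw [integral_mul_const, hρ_int, one_mul]
  · have : NeZero d := ⟨hd.ne'⟩
    have hder := fun t => hasDerivAt_radial_mean r ρ hρc hcs hρ_supp u hu t
    have := constant_of_has_deriv_right_zero (a := 0) (b := 1)
      (f := fun t : ℝ => ∫ y, ρ y * u (t • y))
      (fun t _ => (hder t).continuousAt.continuousWithinAt)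
      (fun t ht => by
        have h := hder t
        rw [radial_mean_deriv_zero r hr ρ hρc hcs hρ_supp hρ_radial u hu hlap t
          ⟨ht.1, ht.2.le⟩] at h
        exact h.hasDerivWithinAt) 1 ⟨zero_le_one, le_rfl⟩
    simp only [one_smul, zero_smul] at this
    rw [this, integral_mul_const, hρ_int, one_mul]

open scoped Convolution

lemma fderiv_conv_apply {d : ℕ} (g ψ : EuclideanSpace ℝ (Fin d) → ℝ) (hg : LocallyIntegrable g)
    (hψ : ContDiff ℝ 1 ψ) (hc : HasCompactSupport ψ) (y v : EuclideanSpace ℝ (Fin d)) :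
    fderiv ℝ (g ⋆[ContinuousLinearMap.mul ℝ ℝ, volume] ψ) y v
      = (g ⋆[ContinuousLinearMap.mul ℝ ℝ, volume] (fun z => fderiv ℝ ψ z v)) y := by
  rw [(hc.hasFDerivAt_convolution_right (ContinuousLinearMap.mul ℝ ℝ) hg hψ y).fderiv,
    convolution_precompR_apply _ hg (hc.fderiv ℝ) (hψ.continuous_fderiv (by norm_num))]

lemma lap_conv {d : ℕ} (g ψ : EuclideanSpace ℝ (Fin d) → ℝ) (hg : LocallyIntegrable g)
    (hψ : ContDiff ℝ 2 ψ) (hc : HasCompactSupport ψ) (y : EuclideanSpace ℝ (Fin d)) :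
    lap (g ⋆[ContinuousLinearMap.mul ℝ ℝ, volume] ψ) y = ∫ x, g x * lap ψ (y - x) := by
  have hD : ∀ i, ContDiff ℝ 1 (fun y => fderiv ℝ ψ y (stdBasis i)) := by
    intro i
    exact (hψ.fderiv_right (m := 1) (by norm_num)).clm_apply contDiff_const
  have hDc : ∀ i, HasCompactSupport (fun y => fderiv ℝ ψ y (stdBasis i)) :=
    fun i => hc.fderiv_apply ℝ _
  unfold lap
  simp_rw [fderiv_conv_apply g ψ hg (hψ.of_le (by norm_num)) hc]
  simp_rw [Finset.mul_sum]
  rw [integral_finsetSum]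
  · refine Finset.sum_congr rfl fun i _ => ?_
    exact fderiv_conv_apply g _ hg (hD i) (hDc i) y _
  · intro i _
    exact ((hDc i).fderiv_apply ℝ (stdBasis i)).convolutionExists_right
      (ContinuousLinearMap.mul ℝ ℝ) hg
      (((hD i).continuous_fderiv (by norm_num)).clm_apply continuous_const) y

lemma lap_comp_const_sub {d : ℕ} (ψ : EuclideanSpace ℝ (Fin d) → ℝ)
    (hψ : ContDiff ℝ 2 ψ) (y x : EuclideanSpace ℝ (Fin d)) :
    lap (fun x => ψ (y - x)) x = lap ψ (y - x) := by
  have key : ∀ (h : EuclideanSpace ℝ (Fin d) → ℝ), Differentiable ℝ h → ∀ x v,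
      fderiv ℝ (fun x => h (y - x)) x v = - fderiv ℝ h (y - x) v := by
    intro h hh x v
    have h1 : HasFDerivAt (fun x : EuclideanSpace ℝ (Fin d) => y - x)
        (-ContinuousLinearMap.id ℝ _) x := (hasFDerivAt_id x).const_sub y
    have := ((hh (y - x)).hasFDerivAt.comp x h1).fderiv
    simp only [Function.comp_def] at this
    rw [this]; simp
  have hD : ∀ i, ContDiff ℝ 1 (fun y => fderiv ℝ ψ y (stdBasis i)) := by
    intro i
    exact (hψ.fderiv_right (m := 1) (by norm_num)).clm_apply contDiff_const
  unfold lap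
  refine Finset.sum_congr rfl fun i _ => ?_
  simp_rw [key ψ (hψ.differentiable (by norm_num))]
  rw [fderiv_fun_neg, neg_apply,
    key _ ((hD i).differentiable (by norm_num)), neg_neg]

lemma lap_eq_zero_of_notMem {d : ℕ} (χ : EuclideanSpace ℝ (Fin d) → ℝ)
    (x : EuclideanSpace ℝ (Fin d)) (hx : x ∉ tsupport χ) : lap χ x = 0 := by
  unfold lap
  refine Finset.sum_eq_zero fun i _ => ?_
  have : (fun y => fderiv ℝ χ y (stdBasis i)) =ᶠ[𝓝 x] fun _ => (0:ℝ) := by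
    filter_upwards [(isClosed_tsupport χ).isOpen_compl.mem_nhds hx] with z hz
    have : fderiv ℝ χ z = 0 := by
      by_contra hne
      exact hz (support_fderiv_subset ℝ hne)
    rw [this]; simp
  rw [this.fderiv_eq]; simp

lemma local_mollification {d : ℕ}
    {Ω : Set (EuclideanSpace ℝ (Fin d))}
    (f : EuclideanSpace ℝ (Fin d) → ℝ) (hf : LocallyIntegrableOn f Ω)
    (hweak : ∀ φ : EuclideanSpace ℝ (Fin d) → ℝ, ContDiff ℝ (⊤ : ℕ∞) φ →
      HasCompactSupport φ → tsupport φ ⊆ Ω → ∫ ξ in Ω, f ξ * lap φ ξ = 0)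
    (r : ℝ) (hr : 0 < r) (ρ : EuclideanSpace ℝ (Fin d) → ℝ)
    (hρ_smooth : ContDiff ℝ (⊤ : ℕ∞) ρ)
    (hρ_supp : Function.support ρ ⊆ Metric.ball 0 r)
    (hρ_int : ∫ x, ρ x = 1)
    (hρ_radial : ∀ x y : EuclideanSpace ℝ (Fin d), ‖x‖ = ‖y‖ → ρ x = ρ y)
    (x₀ : EuclideanSpace ℝ (Fin d)) (δ : ℝ)
    (hK : Metric.closedBall x₀ (r + δ) ⊆ Ω) :
    ∀ᵐ ξ, ξ ∈ Metric.ball x₀ δ →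
      ∫ η in Metric.ball (0 : EuclideanSpace ℝ (Fin d)) r, ρ η * f (ξ - η) = f ξ := by
  set K := Metric.closedBall x₀ (r + δ) with hKdef
  set g := K.indicator f with hg
  have hKm : MeasurableSet K := measurableSet_closedBall
  have hgi : Integrable g := (integrable_indicator_iff hKm).2
    (hf.integrableOn_compact_subset hK (isCompact_closedBall _ _))
  have hρc := hρ_smooth.continuous
  have hcs : HasCompactSupport ρ := HasCompactSupport.of_support_subset_isCompact
    (isCompact_closedBall (0 : EuclideanSpace ℝ (Fin d)) r)
    (hρ_supp.trans Metric.ball_subset_closedBall)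
  have hρi : Integrable ρ := hρc.integrable_of_hasCompactSupport hcs
  set G := ρ ⋆[ContinuousLinearMap.mul ℝ ℝ, volume] g with hG
  have hGi : Integrable G := hρi.integrable_convolution _ hgi
  have main : ∀ᵐ x, x ∈ Metric.ball x₀ δ → G x - g x = 0 := by
    refine Metric.isOpen_ball.ae_eq_zero_of_integral_contDiff_smul_eq_zero
      ((hGi.sub hgi).locallyIntegrable.locallyIntegrableOn _) ?_
    intro φ hφ hφc hφs
    set ψ : EuclideanSpace ℝ (Fin d) → ℝ := fun z => φ (-z) with hψdef
    have hψ : ContDiff ℝ (⊤ : ℕ∞) ψ := hφ.comp contDiff_neg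
    have hψ2 : ContDiff ℝ 2 ψ := hψ.of_le (WithTop.coe_le_coe.2 (le_top : (2 : ℕ∞) ≤ ⊤))
    have hψc : HasCompactSupport ψ := hφc.comp_homeomorph (Homeomorph.neg _)
    set u := g ⋆[ContinuousLinearMap.mul ℝ ℝ, volume] ψ with hu
    have hu2 : ContDiff ℝ 2 u :=
      (hψc.contDiff_convolution_right (n := 2) _ hgi.locallyIntegrable hψ2)
    have hlap : ∀ y ∈ Metric.ball 0 r, lap u y = 0 := by
      intro y hy
      rw [hu, lap_conv g ψ hgi.locallyIntegrable hψ2 hψc]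
      simp_rw [← lap_comp_const_sub ψ hψ2]
      set χ : EuclideanSpace ℝ (Fin d) → ℝ := fun x => ψ (y - x) with hχ
      have hχK : tsupport χ ⊆ K := by
        refine closure_minimal ?_ Metric.isClosed_closedBall
        intro x hx
        have h1 : x - y ∈ Metric.ball x₀ δ := by
          apply hφs
          apply subset_tsupport
          simpa [hχ, hψdef] using hx
        rw [mem_ball_zero_iff] at hy
        rw [mem_ball_iff_norm] at h1
        rw [hKdef, mem_closedBall_iff_norm]
        calc ‖x - x₀‖ = ‖(x - y - x₀) + y‖ := by congr 1; abel
          _ ≤ ‖x - y - x₀‖ + ‖y‖ := norm_add_le _ _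
          _ ≤ r + δ := by linarith
      have hχc : HasCompactSupport χ :=
        (isCompact_closedBall _ _).of_isClosed_subset (isClosed_tsupport _) hχK
      have hχs : ContDiff ℝ (⊤ : ℕ∞) χ := hψ.comp (contDiff_const.sub contDiff_id)
      rw [← hweak χ hχs hχc (hχK.trans hK)]
      have e1 : ∀ x, g x * lap χ x = f x * lap χ x := by
        intro x
        by_cases hx : x ∈ K
        · rw [hg, indicator_of_mem hx]
        · rw [lap_eq_zero_of_notMem χ x (fun h => hx (hχK h))]; simp
      simp_rw [e1]
      symm
      refine setIntegral_eq_integral_of_forall_compl_eq_zero fun x hx => ?_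
      rw [lap_eq_zero_of_notMem χ x (fun h => hx (hK (hχK h)))]; simp
    have hmv := radial_mean_value r hr ρ hρc hcs hρ_supp hρ_radial hρ_int u hu2 hlap
    have hu0 : u 0 = ∫ x, φ x * g x := by
      rw [hu, convolution_def]
      congr 1; ext x
      simp [hψdef, mul_comm]
    have hassoc : (G ⋆[ContinuousLinearMap.mul ℝ ℝ, volume] ψ) 0
        = (ρ ⋆[ContinuousLinearMap.mul ℝ ℝ, volume] u) 0 := by
      rw [hG, hu]
      refine convolution_assoc _ _ _ _ (fun x y z => by simp [mul_assoc]) hρi.aestronglyMeasurable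
        hgi.aestronglyMeasurable hψ.continuous.aestronglyMeasurable ?_ ?_ ?_
      · exact hρi.ae_convolution_exists _ hgi
      · refine Eventually.of_forall fun x => ?_
        exact hψc.norm.convolutionExists_right _ hgi.norm.locallyIntegrable hψ.continuous.norm x
      · refine hcs.norm.convolutionExists_left _ hρc.norm ?_ _
        refine (hψc.norm.continuous_convolution_right _ hgi.norm.locallyIntegrable
          hψ.continuous.norm).locallyIntegrable
    have hL : (G ⋆[ContinuousLinearMap.mul ℝ ℝ, volume] ψ) 0 = ∫ x, φ x * G x := by
      rw [convolution_def]
      congr 1; ext x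
      simp [hψdef, mul_comm]
    have hR : (ρ ⋆[ContinuousLinearMap.mul ℝ ℝ, volume] u) 0 = ∫ y, ρ y * u y := by
      rw [convolution_def, ← integral_neg_eq_self]
      congr 1; ext x
      simp [hρ_radial (-x) x (norm_neg x)]
    have hφ1 : ∀ {h : EuclideanSpace ℝ (Fin d) → ℝ}, Integrable h →
        Integrable (fun x => φ x * h x) := by
      intro h hh
      obtain ⟨C, hC⟩ := hφc.exists_bound_of_continuous hφ.continuous
      exact hh.bdd_mul hφ.continuous.aestronglyMeasurable (Eventually.of_forall hC)
    simp_rw [smul_eq_mul, mul_sub]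
    rw [integral_sub (hφ1 hGi) (hφ1 hgi), ← hL, hassoc, hR, hmv, hu0, sub_self]
  filter_upwards [main] with ξ hξ hmem
  have hδ : dist ξ x₀ < δ := hmem
  have hgξ : g ξ = f ξ := by
    rw [hg, indicator_of_mem]
    rw [hKdef, Metric.mem_closedBall]; linarith
  rw [← hgξ, ← sub_eq_zero.1 (hξ hmem), hG, convolution_def]
  refine Eq.trans (b := ∫ η in Metric.ball (0 : EuclideanSpace ℝ (Fin d)) r,
    ContinuousLinearMap.mul ℝ ℝ (ρ η) (g (ξ - η))) ?_
    (setIntegral_eq_integral_of_forall_compl_eq_zero ?_)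
  · refine setIntegral_congr_fun measurableSet_ball fun η hη => ?_
    have : ξ - η ∈ K := by
      rw [mem_ball_zero_iff] at hη
      rw [hKdef, Metric.mem_closedBall]
      have := dist_triangle (ξ - η) ξ x₀
      have h2 : dist (ξ - η) ξ = ‖η‖ := by simp [dist_eq_norm]
      linarith
    simp [hg, indicator_of_mem this]
  · intro η hη
    have : ρ η = 0 := by
      by_contra hne
      exact hη (hρ_supp hne)
    simp [this]


/-- If `f ∈ L¹_loc(Ω, ℝ)` is distributionally harmonic and `ρ` is a
radial mollifier supported in `B(0, r)`, then `ρ ∗ f = f` a.e. on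
`Ω_r = {ξ ∈ Ω : dist(ξ, ∂Ω) > r} = {ξ : closedBall ξ r ⊆ Ω}`. -/
theorem mollification_eq_of_distributionally_harmonic {d : ℕ}
    {Ω : Set (EuclideanSpace ℝ (Fin d))} (hΩ : IsOpen Ω)
    (f : EuclideanSpace ℝ (Fin d) → ℝ) (hf : LocallyIntegrableOn f Ω)
    (hweak : ∀ φ : EuclideanSpace ℝ (Fin d) → ℝ, ContDiff ℝ (⊤ : ℕ∞) φ →
      HasCompactSupport φ → tsupport φ ⊆ Ω → ∫ ξ in Ω, f ξ * lap φ ξ = 0)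
    (r : ℝ) (hr : 0 < r) (ρ : EuclideanSpace ℝ (Fin d) → ℝ)
    (hρ_smooth : ContDiff ℝ (⊤ : ℕ∞) ρ)
    (hρ_supp : Function.support ρ ⊆ Metric.ball 0 r)
    (hρ_nonneg : ∀ x, 0 ≤ ρ x) (hρ_int : ∫ x, ρ x = 1)
    (hρ_radial : ∀ x y : EuclideanSpace ℝ (Fin d), ‖x‖ = ‖y‖ → ρ x = ρ y) :
    ∀ᵐ ξ ∂(volume.restrict {ξ : EuclideanSpace ℝ (Fin d) |
        ξ ∈ Ω ∧ Metric.closedBall ξ r ⊆ Ω}),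
      ∫ η in Metric.ball (0 : EuclideanSpace ℝ (Fin d)) r, ρ η * f (ξ - η) = f ξ := by
  rw [ae_restrict_iff' ?_]
  swap
  · apply IsOpen.measurableSet
    rw [Metric.isOpen_iff]
    rintro ξ ⟨-, h⟩
    obtain ⟨δ, hδ, hsub⟩ := (isCompact_closedBall ξ r).exists_cthickening_subset_open hΩ h
    refine ⟨δ, hδ, fun x hx => ?_⟩
    have hxs : Metric.closedBall x r ⊆ Ω := by
      refine Subset.trans (fun y hy => ?_) hsub
      have hy2 : y ∈ Metric.closedBall ξ (r + δ) := by
        rw [Metric.mem_closedBall] at hy ⊢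
        have := dist_triangle y x ξ
        have := Metric.mem_ball.1 hx
        linarith
      rwa [cthickening_closedBall hδ.le hr.le, add_comm]
    exact ⟨hxs (Metric.mem_closedBall_self hr.le), hxs⟩
  rw [ae_iff]
  refine measure_null_of_locally_null _ fun ξ hξ => ?_
  simp only [mem_ofPred_eq, Classical.not_imp] at hξ
  obtain ⟨δ, hδ, hsub⟩ := (isCompact_closedBall ξ r).exists_cthickening_subset_open hΩ hξ.1.2
  rw [cthickening_closedBall hδ.le hr.le, add_comm] at hsub
  have key := local_mollification f hf hweak r hr ρ hρ_smooth hρ_supp hρ_int hρ_radial ξ δ hsub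
  rw [ae_iff] at key
  refine ⟨_, inter_mem_nhdsWithin _ (Metric.ball_mem_nhds ξ hδ), measure_mono_null ?_ key⟩
  rintro x ⟨hx, hxb⟩
  simp only [mem_ofPred_eq, Classical.not_imp] at hx ⊢
  exact ⟨hxb, hx.2⟩
end

section
/- Let d ≥ 2, let X be a real Banach space, and let f ∈ L¹(ℝ^d, X) have compact support. Then the Newtonian potential Φ ∗ f, given by (Φ ∗ f)(ξ) = ∫_{ℝ^d} Φ(ξ−η) f(η) dη, is defined for almost every ξ ∈ ℝ^d, belongs to L¹_loc(ℝ^d, X), and satisfies Poisson's equation Δ(Φ ∗ f) = f in the sense of distributions: ∫_{ℝ^d} (Φ ∗ f)(ξ) Δφ(ξ) dξ = ∫_{ℝ^d} f(ξ) φ(ξ) dξ for every φ ∈ C_c^∞(ℝ^d, ℝ). -/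
open MeasureTheory

/-- The fundamental solution of the Laplace equation on `ℝ^d`. -/
noncomputable def fundSol (d : ℕ) (ξ : EuclideanSpace ℝ (Fin d)) : ℝ :=
  if d = 2 then (2 * Real.pi)⁻¹ * Real.log ‖ξ‖
  else ((d : ℝ) * ((2 : ℝ) - d) *
      (volume (Metric.ball (0 : EuclideanSpace ℝ (Fin d)) 1)).toReal)⁻¹ *
    ‖ξ‖ ^ ((2 : ℝ) - d)


open Filter Topology


/-- volume of the unit ball -/
noncomputable def npV (d : ℕ) : ℝ :=
  (volume (Metric.ball (0 : EuclideanSpace ℝ (Fin d)) 1)).toReal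

lemma npV_pos (d : ℕ) : 0 < npV d :=
  ENNReal.toReal_pos (Metric.measure_ball_pos volume _ one_pos).ne' measure_ball_lt_top.ne

/-- radial profile as a function of the squared norm -/
noncomputable def npg (d : ℕ) (s : ℝ) : ℝ :=
  if d = 2 then (4 * Real.pi)⁻¹ * Real.log s
  else ((d : ℝ) * ((2 : ℝ) - d) * npV d)⁻¹ * s ^ (((2 : ℝ) - d) / 2)

lemma fundSol_eq_npg (d : ℕ) (x : EuclideanSpace ℝ (Fin d)) :
    fundSol d x = npg d (‖x‖ ^ 2) := by
  unfold fundSol npg npV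
  split_ifs with h
  · rw [Real.log_pow, mul_inv, mul_inv]; push_cast; ring
  · congr 1
    rw [← Real.rpow_natCast, ← Real.rpow_mul (norm_nonneg _)]
    congr 1; push_cast; ring

lemma npV_two : npV 2 = Real.pi := by
  simp [npV, EuclideanSpace.volume_ball_fin_two, Real.pi_pos.le]

lemma hasDerivAt_npg {d : ℕ} (hd : 2 ≤ d) {s : ℝ} (hs : 0 < s) :
    HasDerivAt (npg d) ((2 * d * npV d)⁻¹ * s ^ (-(d : ℝ) / 2)) s := by
  have hV := npV_pos d
  have hd0 : (d : ℝ) ≠ 0 := by positivity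
  unfold npg
  split_ifs with h
  · subst h
    have := (Real.hasDerivAt_log hs.ne').const_mul (4 * Real.pi)⁻¹
    refine this.congr_deriv ?_
    symm
    rw [npV_two]
    norm_num [Real.rpow_neg_one]
  · have h2 : (2 : ℝ) - d ≠ 0 := by
      intro h'; apply h; have : (d : ℝ) = 2 := by linarith
      exact_mod_cast this
    have := (Real.hasDerivAt_rpow_const (x := s) (p := ((2 : ℝ) - d) / 2) (Or.inl hs.ne')).const_mul
      ((d : ℝ) * ((2 : ℝ) - d) * npV d)⁻¹
    refine this.congr_deriv ?_
    symm
    have : ((2 : ℝ) - d) / 2 - 1 = -(d : ℝ) / 2 := by ring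
    rw [this]
    field_simp

lemma npg_mono {d : ℕ} (hd : 2 ≤ d) {s t : ℝ} (hs : 0 < s) (hst : s ≤ t) : npg d s ≤ npg d t := by
  have hV := npV_pos d
  have : MonotoneOn (npg d) (Set.Ioi 0) := by
    apply monotoneOn_of_deriv_nonneg (convex_Ioi 0)
    · intro x hx; exact (hasDerivAt_npg hd hx).continuousAt.continuousWithinAt
    · rw [interior_Ioi]
      intro x hx; exact (hasDerivAt_npg hd hx).differentiableAt.differentiableWithinAt
    · rw [interior_Ioi]
      intro x hx
      rw [(hasDerivAt_npg hd hx).deriv]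
      have : 0 < x := hx
      positivity
  exact this hs (hs.trans_le hst) hst

lemma measurable_npg (d : ℕ) : Measurable (npg d) := by
  unfold npg
  split_ifs
  · exact Real.measurable_log.const_mul _
  · exact (measurable_id.pow_const _).const_mul _

lemma measurable_fundSol (d : ℕ) : Measurable (fundSol d) := by
  have : fundSol d = fun x => npg d (‖x‖ ^ 2) := funext (fundSol_eq_npg d)
  rw [this]
  exact (measurable_npg d).comp (measurable_norm.pow_const _)

lemma fundSol_integrable_cut {d : ℕ} (hd : 2 ≤ d) (R : ℝ) :
    Integrable ((Metric.ball (0 : EuclideanSpace ℝ (Fin d)) R).indicator (fundSol d)) := by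
  have : Nonempty (Fin d) := ⟨⟨0, by omega⟩⟩
  have h1 : (Metric.ball (0 : EuclideanSpace ℝ (Fin d)) R).indicator (fundSol d)
      = fun x => (Set.Iio R).indicator (fun r => npg d (r ^ 2)) ‖x‖ := by
    funext x
    simp only [Set.indicator, Metric.mem_ball, dist_zero_right, Set.mem_Iio, fundSol_eq_npg]
  rw [h1, integrable_fun_norm_addHaar volume]
  have h2 : (fun y : ℝ => y ^ (Module.finrank ℝ (EuclideanSpace ℝ (Fin d)) - 1) •
      (Set.Iio R).indicator (fun r => npg d (r ^ 2)) y) =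
      (Set.Iio R).indicator (fun y => y ^ (d - 1) * npg d (y ^ 2)) := by
    funext y
    simp [Set.indicator]
  rw [h2, IntegrableOn, integrable_indicator_iff measurableSet_Iio, IntegrableOn,
    Measure.restrict_restrict measurableSet_Iio, ← IntegrableOn]
  have hset : Set.Iio R ∩ Set.Ioi 0 ⊆ Set.Icc 0 R := fun x hx => ⟨le_of_lt hx.2, le_of_lt hx.1⟩
  by_cases h : d = 2
  · subst h
    have hc : Continuous (fun y : ℝ => (2 * Real.pi)⁻¹ * (y * Real.log y)) :=
      continuous_const.mul Real.continuous_mul_log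
    refine ((hc.integrableOn_Icc (a := 0) (b := R)).mono_set hset).congr_fun ?_
      (measurableSet_Iio.inter measurableSet_Ioi)
    intro y hy
    simp only [npg, if_true, Real.log_pow]
    rw [mul_inv, mul_inv]; push_cast; ring
  · have hc : Continuous (fun y : ℝ => ((d : ℝ) * ((2 : ℝ) - d) * npV d)⁻¹ * y) := by fun_prop
    refine ((hc.integrableOn_Icc (a := 0) (b := R)).mono_set hset).congr_fun ?_
      (measurableSet_Iio.inter measurableSet_Ioi)
    intro y hy
    have hy0 : 0 < y := hy.2
    simp only [npg, if_neg h]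
    have : y ^ (d - 1) * (y ^ 2) ^ (((2 : ℝ) - d) / 2) = y := by
      rw [← Real.rpow_natCast, ← Real.rpow_natCast y 2, ← Real.rpow_mul hy0.le, ← Real.rpow_add hy0]
      rw [Nat.cast_sub (by omega)]
      rw [show ((d : ℝ) - (1 : ℕ) + (2 : ℕ) * ((2 - d) / 2)) = 1 by push_cast; ring, Real.rpow_one]
    rw [mul_left_comm, this]

lemma np_kern_integral {d : ℕ} (hd : 2 ≤ d) :
    ∫ y : EuclideanSpace ℝ (Fin d), (npV d)⁻¹ * (1 + ‖y‖ ^ 2) ^ (-(d : ℝ) / 2 - 1) = 1 := by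
  have : Nonempty (Fin d) := ⟨⟨0, by omega⟩⟩
  have hV := npV_pos d
  have hd0 : (d : ℝ) ≠ 0 := by positivity
  rw [integral_const_mul, integral_fun_norm_addHaar volume (fun r => (1 + r ^ 2) ^ (-(d : ℝ) / 2 - 1))]
  have key : ∫ y in Set.Ioi (0 : ℝ), (d : ℝ) * (y ^ (d - 1) * (1 + y ^ 2) ^ (-(d : ℝ) / 2 - 1))
      = 1 - 0 := by
    have h0 : (fun r : ℝ => r ^ d * (1 + r ^ 2) ^ (-(d : ℝ) / 2)) 0 = 0 := by
      simp; omega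
    have h00 : (1 : ℝ) - 0 = 1 - (fun r : ℝ => r ^ d * (1 + r ^ 2) ^ (-(d : ℝ) / 2)) 0 := by rw [h0]
    rw [h00]
    have hder : ∀ x : ℝ, HasDerivAt (fun r : ℝ => r ^ d * (1 + r ^ 2) ^ (-(d : ℝ) / 2))
        ((d : ℝ) * (x ^ (d - 1) * (1 + x ^ 2) ^ (-(d : ℝ) / 2 - 1))) x := by
      intro x
      have hp : 0 < 1 + x ^ 2 := by positivity
      have := (hasDerivAt_pow d x).mul
        (((hasDerivAt_pow 2 x).const_add 1).rpow_const (p := -(d : ℝ) / 2) (Or.inl hp.ne'))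
      refine this.congr_deriv ?_
      symm
      have e1 : (1 + x ^ 2) ^ (-(d : ℝ) / 2) = (1 + x ^ 2) ^ (-(d : ℝ) / 2 - 1) * (1 + x ^ 2) := by
        rw [Real.rpow_sub_one hp.ne']; field_simp
      have e2 : x ^ d = x ^ (d - 1) * x := by rw [← pow_succ]; congr 1; omega
      rw [e1, e2]; push_cast; ring
    apply integral_Ioi_of_hasDerivAt_of_nonneg (g := fun r : ℝ => r ^ d * (1 + r ^ 2) ^ (-(d : ℝ) / 2))
    · exact (hder 0).continuousAt.continuousWithinAt
    · intro x _; exact hder x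
    · intro x hx
      have : 0 < x := hx
      positivity
    · have ht : Tendsto (fun r : ℝ => ((r ^ 2)⁻¹ + 1) ^ (-(d : ℝ) / 2)) atTop (𝓝 1) := by
        have h1 : Tendsto (fun r : ℝ => (r ^ 2)⁻¹ + 1) atTop (𝓝 (0 + 1)) :=
          (tendsto_inv_atTop_zero.comp (tendsto_pow_atTop (by norm_num))).add_const 1
        rw [zero_add] at h1
        have := h1.rpow_const (p := -(d : ℝ) / 2) (Or.inl one_ne_zero)
        simpa using this
      refine ht.congr' ?_
      filter_upwards [eventually_gt_atTop 0] with r hr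
      have : (1 + r ^ 2) = r ^ 2 * ((r ^ 2)⁻¹ + 1) := by field_simp
      rw [this, Real.mul_rpow (by positivity) (by positivity), ← mul_assoc]
      have : r ^ d * (r ^ 2) ^ (-(d : ℝ) / 2) = 1 := by
        rw [← Real.rpow_natCast, ← Real.rpow_natCast r 2, ← Real.rpow_mul hr.le, ← Real.rpow_add hr]
        rw [show (d : ℝ) + (2 : ℕ) * (-(d : ℝ) / 2) = 0 by push_cast; ring, Real.rpow_zero]
      rw [this, one_mul]
  rw [integral_const_mul] at key
  simp only [finrank_euclideanSpace, Fintype.card_fin, smul_eq_mul, nsmul_eq_mul]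
  change _ * ((d : ℝ) * (npV d * _)) = 1
  rw [mul_left_comm (d : ℝ), ← mul_assoc, inv_mul_cancel₀ hV.ne', one_mul, key]
  norm_num

lemma np_kern_tendsto {d : ℕ} (hd : 2 ≤ d) :
    Tendsto (fun x : EuclideanSpace ℝ (Fin d) =>
      ‖x‖ ^ Module.finrank ℝ (EuclideanSpace ℝ (Fin d)) *
        ((npV d)⁻¹ * (1 + ‖x‖ ^ 2) ^ (-(d : ℝ) / 2 - 1))) (Bornology.cobounded _) (𝓝 0) := by
  have hV := npV_pos d
  have h1 : Tendsto (fun x : EuclideanSpace ℝ (Fin d) => (npV d)⁻¹ * (‖x‖ ^ 2)⁻¹)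
      (Bornology.cobounded _) (𝓝 ((npV d)⁻¹ * 0)) := by
    apply Tendsto.const_mul
    exact (tendsto_inv_atTop_zero.comp (tendsto_pow_atTop (by norm_num))).comp tendsto_norm_cobounded_atTop
  rw [mul_zero] at h1
  refine squeeze_zero' (Eventually.of_forall fun x => by positivity) ?_ h1
  filter_upwards [tendsto_norm_cobounded_atTop.eventually_gt_atTop 0] with x hx
  simp only [finrank_euclideanSpace, Fintype.card_fin]
  rw [mul_left_comm]
  refine mul_le_mul_of_nonneg_left ?_ (by positivity)
  have h2 : (1 + ‖x‖ ^ 2) ^ (-(d : ℝ) / 2 - 1) ≤ (‖x‖ ^ 2) ^ (-(d : ℝ) / 2 - 1) := by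
    apply Real.rpow_le_rpow_of_nonpos (by positivity) (by linarith)
    have : (0 : ℝ) ≤ d := by positivity
    linarith
  calc _ ≤ ‖x‖ ^ d * (‖x‖ ^ 2) ^ (-(d : ℝ) / 2 - 1) := by gcongr
    _ = (‖x‖ ^ 2)⁻¹ := by
      rw [← Real.rpow_natCast, ← Real.rpow_natCast ‖x‖ 2, ← Real.rpow_mul hx.le, ← Real.rpow_add hx,
        ← Real.rpow_neg hx.le]
      congr 1; push_cast; ring

lemma np_kern_scale {d : ℕ} {c : ℝ} (hc : 0 < c) (x : EuclideanSpace ℝ (Fin d)) :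
    c ^ Module.finrank ℝ (EuclideanSpace ℝ (Fin d)) *
        ((npV d)⁻¹ * (1 + ‖c • x‖ ^ 2) ^ (-(d : ℝ) / 2 - 1)) =
    (npV d)⁻¹ * ((c ^ 2)⁻¹ * (‖x‖ ^ 2 + (c ^ 2)⁻¹) ^ (-(d : ℝ) / 2 - 1)) := by
  simp only [finrank_euclideanSpace, Fintype.card_fin]
  have : 1 + ‖c • x‖ ^ 2 = c ^ 2 * (‖x‖ ^ 2 + (c ^ 2)⁻¹) := by
    rw [norm_smul, Real.norm_of_nonneg hc.le]; field_simp; ring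
  rw [this, Real.mul_rpow (by positivity) (by positivity), mul_left_comm, ← mul_assoc (c ^ d)]
  congr 2
  rw [← Real.rpow_natCast, ← Real.rpow_natCast c 2, ← Real.rpow_mul hc.le, ← Real.rpow_add hc,
    ← Real.rpow_neg hc.le]
  congr 1; push_cast; ring

lemma np_hasFDerivAt {d : ℕ} (hd : 2 ≤ d) {t : ℝ} (ht : 0 < t) (x : EuclideanSpace ℝ (Fin d)) :
    HasFDerivAt (fun y : EuclideanSpace ℝ (Fin d) => npg d (‖y‖ ^ 2 + t))
      (((2 * d * npV d)⁻¹ * (‖x‖ ^ 2 + t) ^ (-(d : ℝ) / 2)) • ((2 : ℕ) • innerSL ℝ x)) x := by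
  have h1 := (hasStrictFDerivAt_norm_sq x).hasFDerivAt.add_const t
  exact (hasDerivAt_npg hd (show 0 < ‖x‖ ^ 2 + t by positivity)).comp_hasFDerivAt x h1

lemma np_fderiv_apply {d : ℕ} (hd : 2 ≤ d) {t : ℝ} (ht : 0 < t) (i : Fin d)
    (x : EuclideanSpace ℝ (Fin d)) :
    fderiv ℝ (fun y : EuclideanSpace ℝ (Fin d) => npg d (‖y‖ ^ 2 + t)) x (stdBasis i) =
      (d * npV d)⁻¹ * ((‖x‖ ^ 2 + t) ^ (-(d : ℝ) / 2) * x i) := by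
  have hV := npV_pos d
  have hd0 : (d : ℝ) ≠ 0 := by positivity
  rw [(np_hasFDerivAt hd ht x).fderiv]
  simp [stdBasis, EuclideanSpace.inner_single_right]
  field_simp

lemma np_hasFDerivAt2 {d : ℕ} {t : ℝ} (ht : 0 < t) (i : Fin d)
    (x : EuclideanSpace ℝ (Fin d)) :
    ∃ L : EuclideanSpace ℝ (Fin d) →L[ℝ] ℝ, HasFDerivAt (fun y : EuclideanSpace ℝ (Fin d) =>
      (d * npV d)⁻¹ * ((‖y‖ ^ 2 + t) ^ (-(d : ℝ) / 2) * y i)) L x ∧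
      L (stdBasis i) = (d * npV d)⁻¹ * ((‖x‖ ^ 2 + t) ^ (-(d : ℝ) / 2)
        - d * (‖x‖ ^ 2 + t) ^ (-(d : ℝ) / 2 - 1) * (x i) ^ 2) := by
  have hw : 0 < ‖x‖ ^ 2 + t := by positivity
  have h1 := (hasStrictFDerivAt_norm_sq x).hasFDerivAt.add_const t
  have h2 := (Real.hasDerivAt_rpow_const (p := -(d : ℝ) / 2)
    (Or.inl hw.ne')).comp_hasFDerivAt x h1
  have h3 : HasFDerivAt (fun y : EuclideanSpace ℝ (Fin d) => y i)
      (EuclideanSpace.proj i : EuclideanSpace ℝ (Fin d) →L[ℝ] ℝ) x :=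
    (EuclideanSpace.proj i : EuclideanSpace ℝ (Fin d) →L[ℝ] ℝ).hasFDerivAt
  refine ⟨_, (h2.mul h3).const_mul _, ?_⟩
  simp [stdBasis, EuclideanSpace.inner_single_right]
  ring

lemma np_ibp {d : ℕ} (v : EuclideanSpace ℝ (Fin d)) {u u' ψ : EuclideanSpace ℝ (Fin d) → ℝ}
    (hu : Differentiable ℝ u) (hu' : ∀ x, fderiv ℝ u x v = u' x) (hc : Continuous u')
    (hψ : ContDiff ℝ (⊤ : ℕ∞) ψ) (hs : HasCompactSupport ψ) :
    ∫ x, u x * fderiv ℝ ψ x v = - ∫ x, u' x * ψ x := by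
  have hψ' : Continuous (fun x => fderiv ℝ ψ x v) :=
    (hψ.continuous_fderiv (by simp)).clm_apply continuous_const
  have h := integral_mul_fderiv_eq_neg_fderiv_mul_of_integrable (μ := volume) (f := u) (g := ψ) (v := v)
    ?_ ?_ ?_ (fun x _ => hu x) (fun x _ => (hψ.differentiable (by simp)) x)
  · rw [h]; simp only [hu']
  · simp only [hu']
    exact (hc.mul hψ.continuous).integrable_of_hasCompactSupport hs.mul_left
  · exact (hu.continuous.mul hψ').integrable_of_hasCompactSupport (hs.fderiv_apply ℝ v).mul_left
  · exact (hu.continuous.mul hψ.continuous).integrable_of_hasCompactSupport hs.mul_left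

lemma np_contDiff_d {d : ℕ} (v : EuclideanSpace ℝ (Fin d)) {ψ : EuclideanSpace ℝ (Fin d) → ℝ}
    (hψ : ContDiff ℝ (⊤ : ℕ∞) ψ) : ContDiff ℝ (⊤ : ℕ∞) (fun x => fderiv ℝ ψ x v) :=
  (hψ.fderiv_right (m := (⊤ : ℕ∞)) (by simp)).clm_apply contDiff_const

lemma np_lap_cont {d : ℕ} {ψ : EuclideanSpace ℝ (Fin d) → ℝ}
    (hψ : ContDiff ℝ (⊤ : ℕ∞) ψ) : Continuous (lap ψ) := by
  unfold lap
  exact continuous_finsetSum _ fun i _ => (np_contDiff_d _ (np_contDiff_d _ hψ)).continuous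

lemma np_lap_supp {d : ℕ} {ψ : EuclideanSpace ℝ (Fin d) → ℝ}
    (hs : HasCompactSupport ψ) : HasCompactSupport (lap ψ) := by
  refine HasCompactSupport.intro hs (fun x hx => ?_)
  unfold lap
  refine Finset.sum_eq_zero fun i _ => ?_
  have h1 : (fun y => fderiv ℝ ψ y (stdBasis i)) =ᶠ[𝓝 x] fun _ => 0 := by
    have h2 : ∀ᶠ y in 𝓝 x, y ∉ tsupport ψ := (isClosed_tsupport ψ).isOpen_compl.mem_nhds hx
    filter_upwards [h2] with y hy
    have : fderiv ℝ ψ y = 0 := by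
      by_contra h
      exact hy (support_fderiv_subset ℝ h)
    simp [this]
  rw [h1.fderiv_eq]
  simp

lemma np_reg {d : ℕ} (hd : 2 ≤ d) {t : ℝ} (ht : 0 < t) {ψ : EuclideanSpace ℝ (Fin d) → ℝ}
    (hψ : ContDiff ℝ (⊤ : ℕ∞) ψ) (hs : HasCompactSupport ψ) :
    ∫ x, npg d (‖x‖ ^ 2 + t) * lap ψ x =
      ∫ x, ((npV d)⁻¹ * (t * (‖x‖ ^ 2 + t) ^ (-(d : ℝ) / 2 - 1))) * ψ x := by
  have hV := npV_pos d
  have hd0 : (d : ℝ) ≠ 0 := by positivity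
  have hdiff : Differentiable ℝ (fun y : EuclideanSpace ℝ (Fin d) => npg d (‖y‖ ^ 2 + t)) :=
    fun x => (np_hasFDerivAt hd ht x).differentiableAt
  have hw : ∀ x : EuclideanSpace ℝ (Fin d), ‖x‖ ^ 2 + t ≠ 0 := fun x => by positivity
  have hrp : ∀ p : ℝ, Continuous (fun x : EuclideanSpace ℝ (Fin d) => (‖x‖ ^ 2 + t) ^ p) :=
    fun p => ((continuous_norm.pow 2).add_const t).rpow_const fun x => Or.inl (hw x)
  have hxi : ∀ i : Fin d, Continuous (fun x : EuclideanSpace ℝ (Fin d) => x i) := fun i => by fun_prop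
  have hc1 : ∀ i : Fin d, Continuous (fun y : EuclideanSpace ℝ (Fin d) =>
      (d * npV d)⁻¹ * ((‖y‖ ^ 2 + t) ^ (-(d : ℝ) / 2) * y i)) :=
    fun i => continuous_const.mul ((hrp _).mul (hxi i))
  have hc2 : ∀ i : Fin d, Continuous (fun x : EuclideanSpace ℝ (Fin d) =>
      (d * npV d)⁻¹ * ((‖x‖ ^ 2 + t) ^ (-(d : ℝ) / 2)
        - d * (‖x‖ ^ 2 + t) ^ (-(d : ℝ) / 2 - 1) * (x i) ^ 2)) :=
    fun i => continuous_const.mul ((hrp _).sub ((continuous_const.mul (hrp _)).mul ((hxi i).pow 2)))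
  have step : ∀ i : Fin d, ∫ x, npg d (‖x‖ ^ 2 + t) *
      fderiv ℝ (fun y => fderiv ℝ ψ y (stdBasis i)) x (stdBasis i) =
      ∫ x : EuclideanSpace ℝ (Fin d), ((d * npV d)⁻¹ * ((‖x‖ ^ 2 + t) ^ (-(d : ℝ) / 2)
        - d * (‖x‖ ^ 2 + t) ^ (-(d : ℝ) / 2 - 1) * (x i) ^ 2)) * ψ x := by
    intro i
    rw [np_ibp (stdBasis i) hdiff (np_fderiv_apply hd ht i) (hc1 i) (np_contDiff_d _ hψ)
      (hs.fderiv_apply ℝ _)]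
    rw [np_ibp (stdBasis i) (u' := fun x : EuclideanSpace ℝ (Fin d) =>
      (d * npV d)⁻¹ * ((‖x‖ ^ 2 + t) ^ (-(d : ℝ) / 2)
        - d * (‖x‖ ^ 2 + t) ^ (-(d : ℝ) / 2 - 1) * (x i) ^ 2)) ?_ ?_ (hc2 i) hψ hs, neg_neg]
    · intro x
      obtain ⟨L, hL, -⟩ := np_hasFDerivAt2 ht i x
      exact hL.differentiableAt
    · intro x
      obtain ⟨L, hL, hL'⟩ := np_hasFDerivAt2 ht i x
      rw [hL.fderiv, hL']
  simp only [lap, Finset.mul_sum]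
  rw [integral_finsetSum, Finset.sum_congr rfl (fun i _ => step i), ← integral_finsetSum]
  · congr 1
    funext x
    rw [← Finset.sum_mul, ← Finset.mul_sum, Finset.sum_sub_distrib, ← Finset.mul_sum,
      ← EuclideanSpace.real_norm_sq_eq]
    simp only [Finset.sum_const, Finset.card_univ, Fintype.card_fin, nsmul_eq_mul]
    have e1 : (‖x‖ ^ 2 + t) ^ (-(d : ℝ) / 2) =
        (‖x‖ ^ 2 + t) ^ (-(d : ℝ) / 2 - 1) * (‖x‖ ^ 2 + t) := by
      rw [Real.rpow_sub_one (hw x)]; field_simp [hw x]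
    rw [e1]
    field_simp
    ring
  · intro i _
    exact ((hc2 i).mul hψ.continuous).integrable_of_hasCompactSupport hs.mul_left
  · intro i _
    exact (hdiff.continuous.mul (np_contDiff_d _ (np_contDiff_d _ hψ)).continuous).integrable_of_hasCompactSupport
      ((hs.fderiv_apply ℝ _).fderiv_apply ℝ _).mul_left

lemma np_fundSol_mul_integrable {d : ℕ} (hd : 2 ≤ d) {g : EuclideanSpace ℝ (Fin d) → ℝ}
    (hg : Continuous g) (hs : HasCompactSupport g) : Integrable (fun x => g x * fundSol d x) := by
  obtain ⟨R, hR⟩ := hs.isCompact.isBounded.subset_ball (0 : EuclideanSpace ℝ (Fin d))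
  obtain ⟨C, hC⟩ := hs.exists_bound_of_continuous hg
  refine ((fundSol_integrable_cut hd R).bdd_mul (c := C) hg.aestronglyMeasurable
    (Eventually.of_forall hC)).congr (Eventually.of_forall fun x => ?_)
  by_cases hx : x ∈ Metric.ball (0 : EuclideanSpace ℝ (Fin d)) R
  · simp only [Set.indicator_of_mem hx]
  · have : g x = 0 := image_eq_zero_of_notMem_tsupport fun h => hx (hR h)
    simp [this]

lemma np_key0 {d : ℕ} (hd : 2 ≤ d) {ψ : EuclideanSpace ℝ (Fin d) → ℝ}
    (hψ : ContDiff ℝ (⊤ : ℕ∞) ψ) (hs : HasCompactSupport ψ) :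
    ∫ x, lap ψ x * fundSol d x = ψ 0 := by
  have hV := npV_pos d
  have : Nonempty (Fin d) := ⟨⟨0, by omega⟩⟩
  have hLc := np_lap_cont hψ
  have hLs := np_lap_supp hs
  have hcont : ∀ t : ℝ, 0 < t →
      Continuous (fun y : EuclideanSpace ℝ (Fin d) => npg d (‖y‖ ^ 2 + t)) := fun t ht =>
    Differentiable.continuous (𝕜 := ℝ) fun x => (np_hasFDerivAt hd ht x).differentiableAt
  have T1 : Tendsto (fun c : ℝ => ∫ x, lap ψ x * npg d (‖x‖ ^ 2 + (c ^ 2)⁻¹)) atTop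
      (𝓝 (∫ x, lap ψ x * fundSol d x)) := by
    refine tendsto_integral_filter_of_dominated_convergence
      (fun x => ‖lap ψ x * fundSol d x‖ + ‖lap ψ x * npg d (‖x‖ ^ 2 + 1)‖) ?_ ?_ ?_ ?_
    · filter_upwards [eventually_gt_atTop 0] with c hc
      exact (hLc.mul (hcont _ (by positivity))).aestronglyMeasurable
    · filter_upwards [eventually_ge_atTop 1] with c hc
      filter_upwards [Measure.ae_ne volume (0 : EuclideanSpace ℝ (Fin d))] with x hx
      have hx0 : 0 < ‖x‖ ^ 2 := by have := norm_pos_iff.2 hx; positivity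
      have hc0 : 0 < (c ^ 2)⁻¹ := by positivity
      have hc1 : (c ^ 2)⁻¹ ≤ 1 := inv_le_one_of_one_le₀ (one_le_pow₀ hc)
      rw [fundSol_eq_npg, norm_mul, norm_mul, norm_mul, ← mul_add]
      refine mul_le_mul_of_nonneg_left ?_ (norm_nonneg _)
      have a := npg_mono hd hx0 (show ‖x‖ ^ 2 ≤ ‖x‖ ^ 2 + (c ^ 2)⁻¹ by linarith)
      have b := npg_mono hd (show 0 < ‖x‖ ^ 2 + (c ^ 2)⁻¹ by linarith)
        (show ‖x‖ ^ 2 + (c ^ 2)⁻¹ ≤ ‖x‖ ^ 2 + 1 by linarith)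
      simp only [Real.norm_eq_abs]
      rw [abs_le]
      constructor
      · linarith [neg_abs_le (npg d (‖x‖ ^ 2)), abs_nonneg (npg d (‖x‖ ^ 2 + 1))]
      · linarith [le_abs_self (npg d (‖x‖ ^ 2 + 1)), abs_nonneg (npg d (‖x‖ ^ 2))]
    · exact (np_fundSol_mul_integrable hd hLc hLs).norm.add
        ((hLc.mul (hcont 1 one_pos)).integrable_of_hasCompactSupport hLs.mul_right).norm
    · filter_upwards [Measure.ae_ne volume (0 : EuclideanSpace ℝ (Fin d))] with x hx
      have hx0 : 0 < ‖x‖ ^ 2 := by have := norm_pos_iff.2 hx; positivity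
      rw [fundSol_eq_npg]
      apply Tendsto.const_mul
      apply (hasDerivAt_npg hd hx0).continuousAt.tendsto.comp
      have : Tendsto (fun c : ℝ => (c ^ 2)⁻¹) atTop (𝓝 0) :=
        tendsto_inv_atTop_zero.comp (tendsto_pow_atTop (by norm_num))
      simpa using this.const_add (‖x‖ ^ 2)
  have T2 := tendsto_integral_comp_smul_smul_of_integrable (μ := volume)
    (φ := fun y : EuclideanSpace ℝ (Fin d) => (npV d)⁻¹ * (1 + ‖y‖ ^ 2) ^ (-(d : ℝ) / 2 - 1))
    (fun x => by positivity) (np_kern_integral hd) (np_kern_tendsto hd)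
    (hψ.continuous.integrable_of_hasCompactSupport hs) hψ.continuous.continuousAt
  refine tendsto_nhds_unique T1 (T2.congr' ?_)
  filter_upwards [eventually_gt_atTop 0] with c hc
  simp only [np_kern_scale hc, smul_eq_mul]
  rw [← np_reg hd (by positivity) hψ hs]
  simp only [mul_comm]

lemma np_key {d : ℕ} (hd : 2 ≤ d) {φ : EuclideanSpace ℝ (Fin d) → ℝ}
    (hφ : ContDiff ℝ (⊤ : ℕ∞) φ) (hs : HasCompactSupport φ) (η : EuclideanSpace ℝ (Fin d)) :
    ∫ ξ, lap φ ξ * fundSol d (ξ - η) = φ η := by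
  have h := np_key0 hd (ψ := fun x => φ (x + η)) (hφ.comp (contDiff_id.add contDiff_const))
    (hs.comp_homeomorph (Homeomorph.addRight η))
  have h2 : ∀ x, lap (fun x => φ (x + η)) x = lap φ (x + η) := by
    intro x
    unfold lap
    refine Finset.sum_congr rfl fun i _ => ?_
    simp only [fderiv_comp_add_right]
    rw [fderiv_comp_add_right (f := fun y => fderiv ℝ φ y (stdBasis i))]
  simp only [h2, zero_add] at h
  rw [← h, ← integral_sub_right_eq_self (fun x => lap φ (x + η) * fundSol d x) η]
  simp only [sub_add_cancel]

lemma np_prod {d : ℕ} (hd : 2 ≤ d)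
    {X : Type*} [NormedAddCommGroup X] [NormedSpace ℝ X]
    (f : EuclideanSpace ℝ (Fin d) → X) (hf : Integrable f) (R : ℝ) :
    Integrable (fun p : EuclideanSpace ℝ (Fin d) × EuclideanSpace ℝ (Fin d) =>
      ((Metric.ball (0 : EuclideanSpace ℝ (Fin d)) R).indicator (fundSol d) (p.1 - p.2)) • f p.2)
      (volume.prod volume) :=
  hf.convolution_integrand (ContinuousLinearMap.lsmul ℝ ℝ).flip (fundSol_integrable_cut hd R)

lemma np_cut {d : ℕ} {X : Type*} [NormedAddCommGroup X] [NormedSpace ℝ X]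
    (f : EuclideanSpace ℝ (Fin d) → X) (hsupp : HasCompactSupport f) :
    ∃ R' : ℝ, ∀ R : ℝ, ∀ ξ ∈ Metric.ball (0 : EuclideanSpace ℝ (Fin d)) R, ∀ η,
      ((Metric.ball (0 : EuclideanSpace ℝ (Fin d)) (R + R')).indicator (fundSol d) (ξ - η)) • f η
        = fundSol d (ξ - η) • f η := by
  obtain ⟨R', hR⟩ := hsupp.isCompact.isBounded.subset_ball (0 : EuclideanSpace ℝ (Fin d))
  refine ⟨R', fun R ξ hξ η => ?_⟩
  by_cases h : f η = 0
  · simp [h]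
  · have h1 : η ∈ Metric.ball (0 : EuclideanSpace ℝ (Fin d)) R' := hR (subset_tsupport f h)
    rw [Set.indicator_of_mem]
    rw [mem_ball_zero_iff] at *
    exact (norm_sub_le _ _).trans_lt (add_lt_add hξ h1)

/-- For `f ∈ L¹(ℝ^d, X)` with compact support, the Newtonian
potential `Φ ∗ f` is defined a.e., is locally integrable, and satisfies
`Δ(Φ ∗ f) = f` in the sense of distributions. -/
theorem newtonian_potential_basic {d : ℕ} (hd : 2 ≤ d)
    {X : Type*} [NormedAddCommGroup X] [NormedSpace ℝ X] [CompleteSpace X]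
    (f : EuclideanSpace ℝ (Fin d) → X) (hf : Integrable f)
    (hsupp : HasCompactSupport f) :
    (∀ᵐ ξ : EuclideanSpace ℝ (Fin d),
      Integrable (fun η => fundSol d (ξ - η) • f η)) ∧
    LocallyIntegrable (fun ξ => ∫ η, fundSol d (ξ - η) • f η) ∧
    ∀ φ : EuclideanSpace ℝ (Fin d) → ℝ, ContDiff ℝ (⊤ : ℕ∞) φ → HasCompactSupport φ →
      ∫ ξ, (lap φ ξ) • (∫ η, fundSol d (ξ - η) • f η) = ∫ ξ, φ ξ • f ξ := by
  obtain ⟨R', hR'⟩ := np_cut f hsupp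
  refine ⟨?_, ?_, ?_⟩
  · have h : ∀ n : ℕ, ∀ᵐ ξ : EuclideanSpace ℝ (Fin d), Integrable (fun η =>
        ((Metric.ball (0 : EuclideanSpace ℝ (Fin d)) (n + R')).indicator (fundSol d) (ξ - η)) • f η) :=
      fun n => (np_prod hd f hf (n + R')).prod_right_ae
    filter_upwards [ae_all_iff.2 h] with ξ hξ
    obtain ⟨n, hn⟩ := exists_nat_gt ‖ξ‖
    refine (hξ n).congr (Eventually.of_forall fun η => ?_)
    exact hR' n ξ (mem_ball_zero_iff.2 hn) η
  · rw [locallyIntegrable_iff]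
    intro K hK
    obtain ⟨R, hR⟩ := hK.isBounded.subset_ball (0 : EuclideanSpace ℝ (Fin d))
    refine IntegrableOn.mono_set ?_ hR
    refine ((np_prod hd f hf (R + R')).integral_prod_left.integrableOn).congr_fun ?_
      Metric.isOpen_ball.measurableSet
    intro ξ hξ
    exact integral_congr_ae (Eventually.of_forall fun η => hR' R ξ hξ η)
  · intro φ hφ hs
    have hLc := np_lap_cont hφ
    have hLs := np_lap_supp hs
    obtain ⟨R, hR⟩ := hLs.isCompact.isBounded.subset_ball (0 : EuclideanSpace ℝ (Fin d))
    obtain ⟨C, hC⟩ := hLs.exists_bound_of_continuous hLc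
    have hint : Integrable (Function.uncurry fun ξ η : EuclideanSpace ℝ (Fin d) =>
        lap φ ξ • fundSol d (ξ - η) • f η) (volume.prod volume) := by
      refine ((np_prod hd f hf (R + R')).bdd_smul C
        (hLc.comp continuous_fst).aestronglyMeasurable
        (Eventually.of_forall fun p => hC p.1)).congr (Eventually.of_forall fun p => ?_)
      obtain ⟨ξ, η⟩ := p
      change lap φ ξ • ((Metric.ball (0 : EuclideanSpace ℝ (Fin d)) (R + R')).indicator
        (fundSol d) (ξ - η) • f η) = lap φ ξ • fundSol d (ξ - η) • f η
      by_cases hx : ξ ∈ Metric.ball (0 : EuclideanSpace ℝ (Fin d)) R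
      · rw [hR' R ξ hx η]
      · have : lap φ ξ = 0 := image_eq_zero_of_notMem_tsupport fun h => hx (hR h)
        simp [this]
    simp only [← integral_smul]
    rw [integral_integral_swap hint]
    refine integral_congr_ae (Eventually.of_forall fun η => ?_)
    simp only [smul_smul]
    rw [integral_smul_const, np_key hd hφ hs]
end
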